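/- Let μ be a finite positive Borel measure on [0,1). The following conditions are equivalent: (i) the operator I_μ is well defined on Λ²_{1/2} and bounded from Λ²_{1/2} into itself; (ii) the operator H_μ is well defined on Λ²_{1/2} and bounded from Λ²_{1/2} into itself; (iii) μ is a 1-logarithmic 1-Carleson measure. -/

import Mathlib

open MeasureTheory Set Metric ENNReal

noncomputable section

namespace PaperHankel

/-- The moment of order `n` of a measure on `[0,1)`:  `μ_n = ∫_{[0,1)} t^n dμ(t)`. -/
def mom (μ : Measure ℝ) (n : ℕ) : ℝ := ∫ t in Ico (0:ℝ) 1, t ^ n ∂μ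

/-- The `n`-th Taylor coefficient of `f` at `0`. -/
def tc (f : ℂ → ℂ) (n : ℕ) : ℂ := iteratedDeriv n f 0 / n.factorial

/-- The `n`-th Taylor coefficient of `H_μ f`, namely `∑_k μ_{n+k} a_k`. -/
def hmuCoeff (μ : Measure ℝ) (f : ℂ → ℂ) (n : ℕ) : ℂ :=
  ∑' k : ℕ, (mom μ (n + k) : ℂ) * tc f k

/-- `H_μ f` is well defined: each coefficient series converges absolutely, and the resulting
power series has radius of convergence at least `1`. -/
def HmuWD (μ : Measure ℝ) (f : ℂ → ℂ) : Prop :=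
  (∀ n : ℕ, Summable fun k : ℕ => ‖(mom μ (n + k) : ℂ) * tc f k‖) ∧
  ∀ z ∈ ball (0:ℂ) 1, Summable fun n : ℕ => ‖hmuCoeff μ f n * z ^ n‖

/-- The generalized Hilbert operator induced by the Hankel matrix of moments of `μ`. -/
def Hmu (μ : Measure ℝ) (f : ℂ → ℂ) : ℂ → ℂ :=
  fun z => ∑' n : ℕ, hmuCoeff μ f n * z ^ n

/-- `I_μ f` is well defined: the defining integral converges absolutely for every `z ∈ 𝔻`. -/
def ImuWD (μ : Measure ℝ) (f : ℂ → ℂ) : Prop :=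
  ∀ z ∈ ball (0:ℂ) 1, IntegrableOn (fun t : ℝ => f t / (1 - t * z)) (Ico (0:ℝ) 1) μ

/-- The integral operator `I_μ f (z) = ∫_{[0,1)} f(t)/(1-tz) dμ(t)`. -/
def Imu (μ : Measure ℝ) (f : ℂ → ℂ) : ℂ → ℂ :=
  fun z => ∫ t in Ico (0:ℝ) 1, f t / (1 - t * z) ∂μ

/-- The `p`-th circle mean `M_p(r,f)` raised into the Hardy norm shape:
`((1/2π) ∫_0^{2π} |f(r e^{iθ})|^p dθ)^{1/p}`. -/
def circMean (p : ℝ) (f : ℂ → ℂ) (r : ℝ) : ℝ :=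
  ((2 * Real.pi)⁻¹ * ∫ θ in (0:ℝ)..(2 * Real.pi),
      ‖f (r * Complex.exp (θ * Complex.I))‖ ^ p) ^ (1 / p)

/-- Membership in the Hardy space `H^p`. -/
def MemHardy (p : ℝ) (f : ℂ → ℂ) : Prop :=
  DifferentiableOn ℂ f (ball (0:ℂ) 1) ∧ ∃ M : ℝ, ∀ r ∈ Ico (0:ℝ) 1, circMean p f r ≤ M

/-- The `H^p` norm. -/
def hardyNorm (p : ℝ) (f : ℂ → ℂ) : ℝ :=
  sSup {x : ℝ | ∃ r ∈ Ico (0:ℝ) 1, x = circMean p f r}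

/-- Membership in `H^∞`: analytic and bounded on the unit disc. -/
def MemHinf (f : ℂ → ℂ) : Prop :=
  DifferentiableOn ℂ f (ball (0:ℂ) 1) ∧ ∃ M : ℝ, ∀ z ∈ ball (0:ℂ) 1, ‖f z‖ ≤ M

/-- The `H^∞` norm. -/
def hinfNorm (f : ℂ → ℂ) : ℝ := sSup {x : ℝ | ∃ z ∈ ball (0:ℂ) 1, x = ‖f z‖}

/-- The mean `M_2(r,g) = ((1/2π) ∫_0^{2π} |g(r e^{iθ})|² dθ)^{1/2}`. -/
def M2 (g : ℂ → ℂ) (r : ℝ) : ℝ :=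
  Real.sqrt ((2 * Real.pi)⁻¹ * ∫ θ in (0:ℝ)..(2 * Real.pi),
      ‖g (r * Complex.exp (θ * Complex.I))‖ ^ 2)

/-- Membership in the mean Lipschitz space `Λ²_{1/2}`:
`M_2(r,f') = O((1-r)^{-1/2})` as `r → 1⁻`. -/
def MemLambda (f : ℂ → ℂ) : Prop :=
  DifferentiableOn ℂ f (ball (0:ℂ) 1) ∧
  ∃ C : ℝ, ∀ r ∈ Ico (0:ℝ) 1, Real.sqrt (1 - r) * M2 (deriv f) r ≤ C

/-- The norm on `Λ²_{1/2}`. -/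
def lambdaNorm (f : ℂ → ℂ) : ℝ :=
  ‖f 0‖ + sSup {x : ℝ | ∃ r ∈ Ico (0:ℝ) 1, x = Real.sqrt (1 - r) * M2 (deriv f) r}

/-- `∫_𝔻 |f'(z)|² g(z,a)^s dA(z)` with `g(z,a) = log |(1- ā z)/(z-a)|` and `dA` the
normalized area measure, computed as a lower integral in `[0,∞]`. -/
def qsInt (s : ℝ) (f : ℂ → ℂ) (a : ℂ) : ℝ≥0∞ :=
  (ENNReal.ofReal Real.pi)⁻¹ * ∫⁻ z in ball (0:ℂ) 1,
    ENNReal.ofReal (‖deriv f z‖ ^ 2 * (Real.log ‖(1 - (starRingEnd ℂ) a * z) / (z - a)‖) ^ s)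

/-- Membership in `Q_s`: analytic on `𝔻` with `ρ_{Q_s}(f)² = sup_{a ∈ 𝔻} ∫ ... < ∞`. -/
def MemQs (s : ℝ) (f : ℂ → ℂ) : Prop :=
  DifferentiableOn ℂ f (ball (0:ℂ) 1) ∧ (⨆ a ∈ ball (0:ℂ) 1, qsInt s f a) < ⊤

/-- The norm on `Q_s`, `‖f‖ = |f(0)| + ρ_{Q_s}(f)`. -/
def qsNorm (s : ℝ) (f : ℂ → ℂ) : ℝ :=
  ‖f 0‖ + Real.sqrt (⨆ a ∈ ball (0:ℂ) 1, qsInt s f a).toReal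

/-- The condition `∫_{[0,1)} tⁿ log(1/(1-t)) dμ(t) = O(1/n)`, stated with the lower
integral so that in particular the integrals are finite. -/
def LogMomentBigO (μ : Measure ℝ) : Prop :=
  ∃ C > 0, ∀ n : ℕ, 1 ≤ n →
    (∫⁻ t in Ico (0:ℝ) 1, ENNReal.ofReal (t ^ n * Real.log (1 / (1 - t))) ∂μ) ≤
      ENNReal.ofReal (C / n)

/-- Membership in the Bloch space. -/
def MemBloch (f : ℂ → ℂ) : Prop :=
  DifferentiableOn ℂ f (ball (0:ℂ) 1) ∧
  ∃ M : ℝ, ∀ z ∈ ball (0:ℂ) 1, (1 - ‖z‖ ^ 2) * ‖deriv f z‖ ≤ M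

/-- The Bloch norm `‖f‖ = |f(0)| + ρ_B(f)`. -/
def blochNorm (f : ℂ → ℂ) : ℝ :=
  ‖f 0‖ + sSup {x : ℝ | ∃ z ∈ ball (0:ℂ) 1, x = (1 - ‖z‖ ^ 2) * ‖deriv f z‖}

/-- Membership in the Besov space `B^p`. -/
def MemBesov (p : ℝ) (f : ℂ → ℂ) : Prop :=
  DifferentiableOn ℂ f (ball (0:ℂ) 1) ∧
  IntegrableOn (fun z : ℂ => (1 - ‖z‖ ^ 2) ^ (p - 2) * ‖deriv f z‖ ^ p) (ball (0:ℂ) 1) volume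

/-- The Besov norm `‖f‖ = |f(0)| + ρ_p(f)`. -/
def besovNorm (p : ℝ) (f : ℂ → ℂ) : ℝ :=
  ‖f 0‖ + (Real.pi⁻¹ *
    ∫ z in ball (0:ℂ) 1, (1 - ‖z‖ ^ 2) ^ (p - 2) * ‖deriv f z‖ ^ p) ^ (1 / p)

/-- `μ` is an `α`-logarithmic `s`-Carleson measure on `[0,1)`. -/
def IsLogCarleson (μ : Measure ℝ) (α s : ℝ) : Prop :=
  ∃ C > 0, ∀ t ∈ Ico (0:ℝ) 1,
    (μ (Ico t 1)).toReal * Real.log (2 / (1 - t)) ^ α ≤ C * (1 - t) ^ s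

/-- `μ` is an `s`-Carleson measure on `[0,1)`. -/
def IsCarleson (μ : Measure ℝ) (s : ℝ) : Prop :=
  ∃ C > 0, ∀ t ∈ Ico (0:ℝ) 1, (μ (Ico t 1)).toReal ≤ C * (1 - t) ^ s


/-!
Functions in `Λ²_{1/2}` grow at most like `log (2 / (1 - t))` along `[0,1)`, even with their Taylor
coefficients replaced by absolute values: Cauchy–Schwarz turns `M_2(r, f') = O((1-r)^{-1/2})` into
`∑ k |a_k| t^{k-1} = O(1 / (1-t))`, which integrates to a logarithm. Hence as soon as
`∫ tⁿ log (2 / (1 - t)) dμ = O(1/n)`, the series `I_μ f` and `H_μ f` have the same coefficients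
`∫ tⁿ f dμ = O(1/n)`, and power series with `O(1/n)` coefficients belong to `Λ²_{1/2}`. Integration
by parts and restriction to `[s, 1)` with `n ≈ 1 / (1 - s)` show that this moment condition is the
logarithmic Carleson condition. Conversely, the image of `log (2 / (1 - z)) ∈ Λ²_{1/2}` has the
decreasing coefficients `∫ tⁿ log (2 / (1 - t)) dμ`, and for decreasing coefficients membership in
`Λ²_{1/2}` forces `O(1/n)`.
-/

section PowerSeries

variable {c : ℕ → ℂ} {F f : ℂ → ℂ}

lemma hasSum_tc_mul_pow (hf : DifferentiableOn ℂ f (ball (0 : ℂ) 1)) {z : ℂ}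
    (hz : z ∈ ball (0 : ℂ) 1) : HasSum (fun n => tc f n * z ^ n) (f z) := by
  convert! Complex.hasSum_taylorSeries_on_ball hf hz using 2 with n
  simp only [tc, sub_zero, smul_eq_mul]
  ring

lemma ofReal_mem_ball {r : ℝ} (hr : r ∈ Ico (0 : ℝ) 1) : (r : ℂ) ∈ ball (0 : ℂ) 1 := by
  simp [abs_of_nonneg hr.1, hr.2]

lemma summable_norm_mul_pow (hF : ∀ z ∈ ball (0 : ℂ) 1, HasSum (fun n => c n * z ^ n) (F z))
    {r : ℝ} (hr : r ∈ Ico (0 : ℝ) 1) : Summable fun n => ‖c n‖ * r ^ n := by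
  simpa [abs_of_nonneg hr.1] using (hF r (ofReal_mem_ball hr)).summable.norm

lemma hasFPowerSeriesOnBall_ofScalars
    (hF : ∀ z ∈ ball (0 : ℂ) 1, HasSum (fun n => c n * z ^ n) (F z)) :
    HasFPowerSeriesOnBall F (.ofScalars ℂ c) 0 1 where
  r_le := ENNReal.le_of_forall_nnreal_lt fun r hr =>
    FormalMultilinearSeries.le_radius_of_summable _ <| by
      simpa using summable_norm_mul_pow hF ⟨r.2, by exact_mod_cast hr⟩
  r_pos := one_pos
  hasSum {z} hz := by
    rw [← ENNReal.coe_one, eball_coe] at hz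
    simpa [FormalMultilinearSeries.ofScalars_apply_eq, mul_comm] using hF z hz

lemma differentiableOn_of_hasSum
    (hF : ∀ z ∈ ball (0 : ℂ) 1, HasSum (fun n => c n * z ^ n) (F z)) :
    DifferentiableOn ℂ F (ball (0 : ℂ) 1) := by
  simpa only [← ENNReal.coe_one, eball_coe, NNReal.coe_one] using
    (hasFPowerSeriesOnBall_ofScalars hF).differentiableOn

lemma tc_eq_of_hasSum (hF : ∀ z ∈ ball (0 : ℂ) 1, HasSum (fun n => c n * z ^ n) (F z)) (n : ℕ) :
    tc F n = c n := by
  have hseries := (hasFPowerSeriesOnBall_ofScalars hF).hasFPowerSeriesAt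
  have htaylor := hseries.analyticAt.hasFPowerSeriesAt
  exact congrFun (FormalMultilinearSeries.ofScalars_series_injective ℂ ℂ
    (htaylor.eq_formalMultilinearSeries hseries)) n

lemma tc_zero (f : ℂ → ℂ) : tc f 0 = f 0 := by simp [tc]

lemma tc_deriv (f : ℂ → ℂ) (n : ℕ) : tc (deriv f) n = (n + 1) * tc f (n + 1) := by
  have hn : (n : ℂ) + 1 ≠ 0 := n.cast_add_one_ne_zero
  simp only [tc, iteratedDeriv_succ', Nat.factorial_succ, Nat.cast_mul, Nat.cast_succ]
  field_simp

end PowerSeries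

section Parseval

open Filter Topology

lemma sum_range_sq_norm_eq_circleAverage (a : ℕ → ℂ) (N : ℕ) :
    ∑ n ∈ Finset.range N, ‖a n‖ ^ 2 =
      Real.circleAverage (fun z => ‖∑ n ∈ Finset.range N, a n * z ^ n‖ ^ 2) 0 1 := by
  let p : Polynomial ℂ := ∑ n ∈ Finset.range N, Polynomial.monomial n (a n)
  have coeff_p (n : ℕ) : p.coeff n = if n < N then a n else 0 := by
    simp [p, Polynomial.coeff_monomial]
  have eval_p (z : ℂ) : p.eval z = ∑ n ∈ Finset.range N, a n * z ^ n := by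
    simp [p, Polynomial.eval_finsetSum]
  have support_p : p.support ⊆ Finset.range N := fun n hn => by
    by_contra h
    simp_all
  simp only [← eval_p, ← Polynomial.sum_sq_norm_coeff_eq_circleAverage]
  rw [Finset.sum_subset support_p fun n _ hn => by simp_all]
  exact Finset.sum_congr rfl fun n hn => by rw [coeff_p, if_pos (Finset.mem_range.1 hn)]

lemma hasSum_sq_norm_circleAverage_one {a : ℕ → ℂ} {g : ℂ → ℂ} (ha : Summable fun n => ‖a n‖)
    (hg : ∀ z : ℂ, ‖z‖ = 1 → HasSum (fun n => a n * z ^ n) (g z)) :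
    HasSum (fun n => ‖a n‖ ^ 2) (Real.circleAverage (fun z => ‖g z‖ ^ 2) 0 1) := by
  rw [hasSum_iff_tendsto_nat_of_nonneg fun n => by positivity]
  simp only [sum_range_sq_norm_eq_circleAverage]
  refine (intervalIntegral.tendsto_integral_filter_of_dominated_convergence
    (fun _ => (∑' n, ‖a n‖) ^ 2) ?_ ?_ intervalIntegrable_const ?_).const_smul _
  · exact .of_forall fun N => Continuous.aestronglyMeasurable (by fun_prop)
  · refine .of_forall fun N => .of_forall fun θ _ => ?_
    have hterm (n : ℕ) : ‖a n * circleMap 0 1 θ ^ n‖ = ‖a n‖ := by simp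
    rw [Real.norm_of_nonneg (by positivity)]
    refine pow_le_pow_left₀ (norm_nonneg _) ((norm_sum_le _ _).trans ?_) 2
    simp only [hterm]
    exact ha.sum_le_tsum _ fun n _ => norm_nonneg _
  · exact .of_forall fun θ _ =>
      ((hg _ (by simp)).tendsto_sum_nat.norm).pow 2

lemma M2_sq_eq_circleAverage (g : ℂ → ℂ) (r : ℝ) :
    M2 g r ^ 2 = Real.circleAverage (fun z => ‖g z‖ ^ 2) 0 r := by
  have hnonneg : 0 ≤ Real.circleAverage (fun z => ‖g z‖ ^ 2) 0 r :=
    Real.circleAverage_nonneg_of_nonneg fun z _ => by positivity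
  simp only [Real.circleAverage_def, circleMap, zero_add, smul_eq_mul] at hnonneg ⊢
  exact Real.sq_sqrt hnonneg

lemma hasSum_M2_sq {c : ℕ → ℂ} {g : ℂ → ℂ}
    (hg : ∀ z ∈ ball (0 : ℂ) 1, HasSum (fun n => c n * z ^ n) (g z)) {r : ℝ}
    (hr : r ∈ Ico (0 : ℝ) 1) :
    HasSum (fun n => ‖c n‖ ^ 2 * (r ^ 2) ^ n) (M2 g r ^ 2) := by
  have hsum : HasSum (fun n => ‖c n * r ^ n‖ ^ 2) (M2 g r ^ 2) := by
    rw [M2_sq_eq_circleAverage, Real.circleAverage_eq_circleAverage_zero_one]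
    refine hasSum_sq_norm_circleAverage_one (hg r (ofReal_mem_ball hr)).summable.norm ?_
    intro z hz
    simp only [mul_assoc, ← mul_pow, add_zero]
    exact hg _ (by simpa [hz] using ofReal_mem_ball hr)
  convert! hsum using 2 with n
  rw [norm_mul, norm_pow, Complex.norm_of_nonneg hr.1]
  ring

lemma hasSum_M2_deriv_sq {f : ℂ → ℂ} (hf : DifferentiableOn ℂ f (ball (0 : ℂ) 1)) {r : ℝ}
    (hr : r ∈ Ico (0 : ℝ) 1) :
    HasSum (fun n : ℕ => ((n + 1) * ‖tc f (n + 1)‖) ^ 2 * (r ^ 2) ^ n) (M2 (deriv f) r ^ 2) := by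
  have h := hasSum_M2_sq (fun z hz => hasSum_tc_mul_pow (hf.deriv isOpen_ball) hz) hr
  simpa only [tc_deriv, norm_mul, ← Nat.cast_succ, Complex.norm_natCast] using h

end Parseval

section LogWeight

lemma log_two_le_log_two_div {t : ℝ} (ht : t ∈ Ico (0 : ℝ) 1) :
    Real.log 2 ≤ Real.log (2 / (1 - t)) := by
  refine Real.log_le_log two_pos ((le_div_iff₀ (sub_pos.2 ht.2)).2 ?_)
  linarith [ht.1]

lemma log_two_div_pos {t : ℝ} (ht : t ∈ Ico (0 : ℝ) 1) : 0 < Real.log (2 / (1 - t)) :=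
  (Real.log_pos one_lt_two).trans_le (log_two_le_log_two_div ht)

lemma hasDerivAt_log_two_div {t : ℝ} (ht : t < 1) :
    HasDerivAt (fun t => Real.log (2 / (1 - t))) (1 - t)⁻¹ t := by
  have ht' : 1 - t ≠ 0 := (sub_pos.2 ht).ne'
  convert! (((hasDerivAt_id t).const_sub 1).fun_inv ht' |>.const_mul 2).log
    (mul_ne_zero two_ne_zero (inv_ne_zero ht')) using 1
  field_simp
  rw [id_eq, div_self ht']

end LogWeight

section Lambda

variable {f F : ℂ → ℂ} {c : ℕ → ℂ} {r s t : ℝ}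

lemma MemLambda.sqrt_mul_M2_le_lambdaNorm (hf : MemLambda f) (hr : r ∈ Ico (0 : ℝ) 1) :
    √(1 - r) * M2 (deriv f) r ≤ lambdaNorm f := by
  obtain ⟨C, hC⟩ := hf.2
  refine le_add_of_nonneg_of_le (norm_nonneg _) (le_csSup ⟨C, ?_⟩ ⟨r, hr, rfl⟩)
  rintro _ ⟨ρ, hρ, rfl⟩
  exact hC ρ hρ

lemma norm_apply_zero_le_lambdaNorm (f : ℂ → ℂ) : ‖f 0‖ ≤ lambdaNorm f :=
  le_add_of_nonneg_right <| Real.sSup_nonneg <| by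
    rintro _ ⟨r, -, rfl⟩
    exact mul_nonneg (Real.sqrt_nonneg _) (Real.sqrt_nonneg _)

lemma lambdaNorm_nonneg (f : ℂ → ℂ) : 0 ≤ lambdaNorm f :=
  (norm_nonneg _).trans (norm_apply_zero_le_lambdaNorm f)

lemma MemLambda.one_sub_mul_sum_sq_le (hf : MemLambda f) (hs : s ∈ Ico (0 : ℝ) 1) (N : ℕ) :
    (1 - s) * ∑ n ∈ Finset.range N, ((n + 1) * ‖tc f (n + 1)‖) ^ 2 * s ^ n ≤
      2 * lambdaNorm f ^ 2 := by
  have hr : √s ∈ Ico (0 : ℝ) 1 := ⟨Real.sqrt_nonneg s, by simpa using Real.sqrt_lt_sqrt hs.1 hs.2⟩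
  have hsq : √s ^ 2 = s := Real.sq_sqrt hs.1
  have hpartial : ∑ n ∈ Finset.range N, ((n + 1) * ‖tc f (n + 1)‖) ^ 2 * s ^ n ≤
      M2 (deriv f) √s ^ 2 := by
    simpa only [hsq] using
      sum_le_hasSum _ (fun n _ => by positivity) (hasSum_M2_deriv_sq hf.1 hr)
  calc (1 - s) * ∑ n ∈ Finset.range N, ((n + 1) * ‖tc f (n + 1)‖) ^ 2 * s ^ n
      ≤ (1 - s) * M2 (deriv f) √s ^ 2 := mul_le_mul_of_nonneg_left hpartial (sub_pos.2 hs.2).le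
    _ ≤ 2 * (1 - √s) * M2 (deriv f) √s ^ 2 := by
        gcongr
        nlinarith [sq_nonneg (1 - √s)]
    _ = 2 * (√(1 - √s) * M2 (deriv f) √s) ^ 2 := by
        rw [mul_pow, Real.sq_sqrt (by linarith [hr.2]), mul_assoc]
    _ ≤ 2 * lambdaNorm f ^ 2 := by
        gcongr
        · exact mul_nonneg (Real.sqrt_nonneg _) (Real.sqrt_nonneg _)
        · exact hf.sqrt_mul_M2_le_lambdaNorm hr

lemma sqrt_mul_M2_deriv_le (hF : DifferentiableOn ℂ F (ball (0 : ℂ) 1)) {B : ℝ}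
    (hB : ∀ n : ℕ, (n + 1) * ‖tc F (n + 1)‖ ≤ B) (hr : r ∈ Ico (0 : ℝ) 1) :
    √(1 - r) * M2 (deriv F) r ≤ B := by
  have hB0 : 0 ≤ B := le_trans (by positivity) (hB 0)
  have hr2 : r ^ 2 < 1 := pow_lt_one₀ hr.1 hr.2 two_ne_zero
  have hM2 : M2 (deriv F) r ^ 2 ≤ B ^ 2 * (1 - r ^ 2)⁻¹ := by
    refine hasSum_le (fun n => ?_) (hasSum_M2_deriv_sq hF hr)
      ((hasSum_geometric_of_lt_one (sq_nonneg r) hr2).mul_left (B ^ 2))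
    gcongr
    exact hB n
  refine abs_le_of_sq_le_sq' ?_ hB0 |>.2
  calc (√(1 - r) * M2 (deriv F) r) ^ 2 = (1 - r) * M2 (deriv F) r ^ 2 := by
        rw [mul_pow, Real.sq_sqrt (by linarith [hr.2])]
    _ ≤ (1 - r ^ 2) * (B ^ 2 * (1 - r ^ 2)⁻¹) := by
        gcongr
        nlinarith [hr.1, hr.2]
    _ = B ^ 2 := by field_simp [(sub_pos.2 hr2).ne']

lemma memLambda_and_lambdaNorm_le (hF : ∀ z ∈ ball (0 : ℂ) 1, HasSum (fun n => c n * z ^ n) (F z))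
    {B : ℝ} (hB : ∀ n : ℕ, (n + 1) * ‖c (n + 1)‖ ≤ B) :
    MemLambda F ∧ lambdaNorm F ≤ ‖c 0‖ + B := by
  have hdiff := differentiableOn_of_hasSum hF
  have hbound (r : ℝ) (hr : r ∈ Ico (0 : ℝ) 1) : √(1 - r) * M2 (deriv F) r ≤ B :=
    sqrt_mul_M2_deriv_le hdiff (fun n => by simpa only [tc_eq_of_hasSum hF] using hB n) hr
  refine ⟨⟨hdiff, B, hbound⟩, ?_⟩
  rw [lambdaNorm, ← tc_zero F, tc_eq_of_hasSum hF]
  gcongr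
  refine csSup_le ⟨_, 0, by simp, rfl⟩ ?_
  rintro _ ⟨r, hr, rfl⟩
  exact hbound r hr

lemma sq_sum_mul_pow_le (b : ℕ → ℝ) (hs : s ∈ Ico (0 : ℝ) 1) (N : ℕ) :
    (∑ n ∈ Finset.range N, b n * s ^ n) ^ 2 ≤
      (∑ n ∈ Finset.range N, b n ^ 2 * s ^ n) * (1 - s)⁻¹ := by
  have hs0 := hs.1
  calc (∑ n ∈ Finset.range N, b n * s ^ n) ^ 2
      ≤ (∑ n ∈ Finset.range N, b n ^ 2 * s ^ n) * ∑ n ∈ Finset.range N, s ^ n :=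
        Finset.sum_sq_le_sum_mul_sum_of_sq_le_mul _ (fun n _ => by positivity)
          (fun n _ => by positivity) (fun n _ => (by ring : _ = _).le)
    _ ≤ (∑ n ∈ Finset.range N, b n ^ 2 * s ^ n) * (1 - s)⁻¹ := by
        gcongr
        exact sum_le_hasSum _ (fun n _ => by positivity) (hasSum_geometric_of_lt_one hs.1 hs.2)

lemma MemLambda.sum_norm_tc_deriv_mul_pow_le (hf : MemLambda f) (hs : s ∈ Ico (0 : ℝ) 1) (N : ℕ) :
    ∑ n ∈ Finset.range N, (n + 1) * ‖tc f (n + 1)‖ * s ^ n ≤ 2 * lambdaNorm f / (1 - s) := by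
  have hs1 : 0 < 1 - s := sub_pos.2 hs.2
  have hL := lambdaNorm_nonneg f
  refine abs_le_of_sq_le_sq' ?_ (by positivity) |>.2
  calc (∑ n ∈ Finset.range N, (n + 1) * ‖tc f (n + 1)‖ * s ^ n) ^ 2
      ≤ (∑ n ∈ Finset.range N, ((n + 1) * ‖tc f (n + 1)‖) ^ 2 * s ^ n) * (1 - s)⁻¹ :=
        sq_sum_mul_pow_le (fun n => (n + 1) * ‖tc f (n + 1)‖) hs N
    _ = ((1 - s) * ∑ n ∈ Finset.range N, ((n + 1) * ‖tc f (n + 1)‖) ^ 2 * s ^ n) / (1 - s) ^ 2 := by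
        field_simp
    _ ≤ (2 * lambdaNorm f) ^ 2 / (1 - s) ^ 2 := by
        gcongr
        nlinarith [hf.one_sub_mul_sum_sq_le hs N]
    _ = (2 * lambdaNorm f / (1 - s)) ^ 2 := (div_pow ..).symm

lemma MemLambda.sum_norm_tc_mul_pow_le (hf : MemLambda f) (ht : t ∈ Ico (0 : ℝ) 1) (N : ℕ) :
    ∑ n ∈ Finset.range N, ‖tc f n‖ * t ^ n ≤ 2 * lambdaNorm f * Real.log (2 / (1 - t)) := by
  have hlog {s : ℝ} (hs : s < 1) :
      HasDerivAt (fun s => 2 * lambdaNorm f * Real.log (2 / (1 - s)))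
        (2 * lambdaNorm f / (1 - s)) s :=
    (hasDerivAt_log_two_div hs).const_mul _
  have hsum (s : ℝ) :
      HasDerivAt (fun s => ∑ n ∈ Finset.range N, ‖tc f (n + 1)‖ * s ^ (n + 1) + ‖f 0‖)
        (∑ n ∈ Finset.range N, (n + 1) * ‖tc f (n + 1)‖ * s ^ n) s := by
    refine .add_const _ (.fun_sum fun n _ => ?_)
    convert! (hasDerivAt_pow (n + 1) s).const_mul ‖tc f (n + 1)‖ using 1
    rw [Nat.add_sub_cancel, Nat.cast_succ]
    ring
  have hzero : ‖f 0‖ ≤ 2 * lambdaNorm f * Real.log 2 := by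
    nlinarith [norm_apply_zero_le_lambdaNorm f, lambdaNorm_nonneg f, Real.log_two_gt_d9]
  have ht0 := ht.1
  calc ∑ n ∈ Finset.range N, ‖tc f n‖ * t ^ n
      ≤ ∑ n ∈ Finset.range (N + 1), ‖tc f n‖ * t ^ n :=
        Finset.sum_le_sum_of_subset_of_nonneg (Finset.range_subset_range.2 N.le_succ)
          fun n _ _ => by positivity
    _ = ∑ n ∈ Finset.range N, ‖tc f (n + 1)‖ * t ^ (n + 1) + ‖f 0‖ := by
        rw [Finset.sum_range_succ', tc_zero, pow_zero, mul_one]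
    _ ≤ 2 * lambdaNorm f * Real.log (2 / (1 - t)) :=
        image_le_of_deriv_right_le_deriv_boundary (a := 0) (b := t)
          (fun s _ => (hsum s).continuousAt.continuousWithinAt)
          (fun s _ => (hsum s).hasDerivWithinAt) (by simpa using hzero)
          (fun s hs => (hlog (hs.2.trans_lt ht.2)).continuousAt.continuousWithinAt)
          (fun s hs => (hlog (hs.2.trans ht.2)).hasDerivWithinAt)
          (fun s hs => hf.sum_norm_tc_deriv_mul_pow_le ⟨hs.1, hs.2.trans ht.2⟩ N) ⟨ht.1, le_rfl⟩

lemma cube_div_three_le_sum_sq (N : ℕ) :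
    (N : ℝ) ^ 3 / 3 ≤ ∑ n ∈ Finset.range N, ((n : ℝ) + 1) ^ 2 := by
  induction N with
  | zero => simp
  | succ N ih =>
    rw [Finset.sum_range_succ]
    push_cast
    nlinarith [N.cast_nonneg (α := ℝ)]

lemma one_half_le_one_sub_pow {x : ℝ} {N : ℕ} (hx : N * x ≤ 1 / 2) (hx1 : x ≤ 1) :
    1 / 2 ≤ (1 - x) ^ N := by
  have := one_add_mul_le_pow (a := -x) (by linarith) N
  rw [← sub_eq_add_neg] at this
  linarith

lemma MemLambda.mul_norm_tc_le (hf : MemLambda f) (hanti : Antitone fun n => ‖tc f n‖) (N : ℕ) :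
    N * ‖tc f N‖ ≤ 5 * lambdaNorm f := by
  rcases N.eq_zero_or_pos with rfl | hN
  · simpa using lambdaNorm_nonneg f
  have hN1 : (1 : ℝ) ≤ N := by exact_mod_cast hN
  set x : ℝ := 1 / (2 * N) with hx
  have hNx : N * x = 1 / 2 := by rw [hx]; field_simp
  have hx0 : 0 < x := by positivity
  have hx1 : x ≤ 1 := by nlinarith
  have hterm (n : ℕ) (hn : n ∈ Finset.range N) :
      ((n : ℝ) + 1) ^ 2 * (‖tc f N‖ ^ 2 / 2) ≤
        ((n + 1) * ‖tc f (n + 1)‖) ^ 2 * (1 - x) ^ n := by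
    have hnN := Finset.mem_range.1 hn
    calc ((n : ℝ) + 1) ^ 2 * (‖tc f N‖ ^ 2 / 2) = ((n + 1) * ‖tc f N‖) ^ 2 * (1 / 2) := by ring
      _ ≤ ((n + 1) * ‖tc f (n + 1)‖) ^ 2 * (1 - x) ^ n := by
        gcongr
        · exact hanti (Nat.succ_le_of_lt hnN)
        · refine one_half_le_one_sub_pow (hNx ▸ ?_) hx1
          gcongr
  have hsum : (N : ℝ) ^ 3 / 3 * (‖tc f N‖ ^ 2 / 2) ≤
      ∑ n ∈ Finset.range N, ((n + 1) * ‖tc f (n + 1)‖) ^ 2 * (1 - x) ^ n := by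
    refine le_trans ?_ (Finset.sum_le_sum hterm)
    rw [← Finset.sum_mul]
    gcongr
    exact cube_div_three_le_sum_sq N
  refine abs_le_of_sq_le_sq' ?_ (mul_nonneg (by norm_num) (lambdaNorm_nonneg f)) |>.2
  calc (N * ‖tc f N‖) ^ 2 = 12 * (x * ((N : ℝ) ^ 3 / 3 * (‖tc f N‖ ^ 2 / 2))) := by
        rw [hx]
        field_simp
        ring
    _ ≤ 12 * (x * ∑ n ∈ Finset.range N, ((n + 1) * ‖tc f (n + 1)‖) ^ 2 * (1 - x) ^ n) := by
        gcongr
    _ ≤ 12 * (2 * lambdaNorm f ^ 2) := by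
        refine mul_le_mul_of_nonneg_left ?_ (by norm_num)
        simpa only [_root_.sub_sub_cancel] using
          hf.one_sub_mul_sum_sq_le (s := 1 - x) ⟨by linarith, by linarith⟩ N
    _ ≤ (5 * lambdaNorm f) ^ 2 := by nlinarith [sq_nonneg (lambdaNorm f)]

lemma MemLambda.add_one_mul_norm_tc_le (hf : MemLambda f) (hanti : Antitone fun n => ‖tc f n‖)
    (n : ℕ) : (n + 1) * ‖tc f n‖ ≤ 6 * lambdaNorm f := by
  have h0 : ‖tc f n‖ ≤ lambdaNorm f :=
    (hanti n.zero_le).trans (by simpa only [tc_zero] using norm_apply_zero_le_lambdaNorm f)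
  linarith [hf.mul_norm_tc_le hanti n]

end Lambda

section LogMoment

variable {μ : Measure ℝ} {α A C t : ℝ}

/-- The moment `∫_{[0,1)} tⁿ log(2/(1-t))^α dμ(t)` of order `n` with a logarithmic weight, as a
lower integral, so that it is `∞` rather than `0` when it diverges. -/
def logMoment (μ : Measure ℝ) (α : ℝ) (n : ℕ) : ℝ≥0∞ :=
  ∫⁻ t in Ico (0 : ℝ) 1, ENNReal.ofReal (t ^ n * Real.log (2 / (1 - t)) ^ α) ∂μ

lemma lintegral_lintegral_Ioo [SFinite μ] (a b : ℝ) {g : ℝ → ℝ≥0∞} (hg : Measurable g) :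
    ∫⁻ t in Ico a b, (∫⁻ s in Ioo a t, g s) ∂μ = ∫⁻ s in Ioo a b, μ (Ioo s b) * g s := by
  let T : Set (ℝ × ℝ) := {p | a < p.2 ∧ p.2 < p.1 ∧ p.1 < b}
  have hT : MeasurableSet T := by measurability
  have hleft (t : ℝ) : (Ico a b).indicator (fun t => ∫⁻ s in Ioo a t, g s) t =
      ∫⁻ s, T.indicator (fun p => g p.2) (t, s) := by
    by_cases ht : t ∈ Ico a b
    · rw [indicator_of_mem ht, ← lintegral_indicator measurableSet_Ioo]
      congr with s
      simp [indicator, T, ht.2]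
    · rw [indicator_of_notMem ht, lintegral_congr fun s => indicator_of_notMem
        (fun hs => ht ⟨(hs.1.trans hs.2.1).le, hs.2.2⟩) _, lintegral_zero]
  have hright (s : ℝ) : ∫⁻ t, T.indicator (fun p => g p.2) (t, s) ∂μ =
      (Ioo a b).indicator (fun s => μ (Ioo s b) * g s) s := by
    by_cases hs : s ∈ Ioo a b
    · rw [indicator_of_mem hs, mul_comm, ← lintegral_indicator_const measurableSet_Ioo]
      congr with t
      simp [indicator, T, hs.1]
    · rw [indicator_of_notMem hs, lintegral_congr fun t => indicator_of_notMem
        (fun ht => hs ⟨ht.1, ht.2.1.trans ht.2.2⟩) _, lintegral_zero]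
  rw [← lintegral_indicator measurableSet_Ico, ← lintegral_indicator measurableSet_Ioo]
  simp only [hleft, ← hright]
  exact lintegral_lintegral_swap ((hg.comp measurable_snd).indicator hT).aemeasurable

lemma lintegral_ofReal_deriv_eq_sub {F F' : ℝ → ℝ} {a b : ℝ} (hab : a ≤ b)
    (hcont : ContinuousOn F (Icc a b)) (hderiv : ∀ x ∈ Ioo a b, HasDerivAt F (F' x) x)
    (hF' : ∀ x ∈ Ioo a b, 0 ≤ F' x) :
    ∫⁻ x in Ioo a b, ENNReal.ofReal (F' x) = ENNReal.ofReal (F b - F a) := by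
  have hint := intervalIntegral.integrableOn_deriv_of_nonneg hcont hderiv hF'
  rw [← intervalIntegral.integral_eq_sub_of_hasDerivAt_of_le hab hcont hderiv
    ((intervalIntegrable_iff_integrableOn_Ioc_of_le hab).2 hint),
    intervalIntegral.integral_of_le hab, integral_Ioc_eq_integral_Ioo,
    ofReal_integral_eq_lintegral_ofReal (hint.mono_set Ioo_subset_Ioc_self)]
  filter_upwards [ae_restrict_mem measurableSet_Ioo] with x hx using hF' x hx

lemma hasDerivAt_pow_mul_log_rpow (n : ℕ) (α : ℝ) (ht : t ∈ Ico (0 : ℝ) 1) :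
    HasDerivAt (fun t => t ^ n * Real.log (2 / (1 - t)) ^ α)
      (Real.log (2 / (1 - t)) ^ α *
        (n * t ^ (n - 1) + t ^ n * (α / (Real.log (2 / (1 - t)) * (1 - t))))) t := by
  have hlog := log_two_div_pos ht
  convert! (hasDerivAt_pow n t).mul ((hasDerivAt_log_two_div ht.2).rpow_const (.inl hlog.ne'))
    using 1
  rw [Real.rpow_sub_one hlog.ne']
  field_simp

lemma lintegral_Ioo_pow_mul_one_sub_add (n : ℕ) {κ : ℝ} (hκ : 0 ≤ κ) :
    ∫⁻ s in Ioo (0 : ℝ) 1, ENNReal.ofReal (n * s ^ (n - 1) * (1 - s) + κ * s ^ n) ≤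
      ENNReal.ofReal ((1 + κ) / (n + 1)) := by
  let F (s : ℝ) := s ^ n * (1 - s) + (1 + κ) * (s ^ (n + 1) / (n + 1))
  have hderiv (s : ℝ) : HasDerivAt F (n * s ^ (n - 1) * (1 - s) + κ * s ^ n) s := by
    convert! ((hasDerivAt_pow n s).mul ((hasDerivAt_id s).const_sub 1)).add
      (((hasDerivAt_pow (n + 1) s).div_const (n + 1 : ℝ)).const_mul (1 + κ)) using 1
    push_cast
    field_simp
    simp only [add_tsub_cancel_right, id_eq]
    ring
  rw [lintegral_ofReal_deriv_eq_sub zero_le_one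
    (fun s _ => (hderiv s).continuousAt.continuousWithinAt) (fun s _ => hderiv s)]
  · gcongr
    have : 0 ≤ (0 : ℝ) ^ n := by positivity
    simp only [F, div_eq_mul_inv, sub_self, sub_zero, mul_zero, mul_one, zero_mul, zero_add,
      one_pow, one_mul, pow_succ]
    linarith
  · rintro s ⟨hs0, hs1⟩
    have := sub_pos.2 hs1
    positivity


lemma logMoment_le_add_lintegral [SFinite μ] (hα : 0 ≤ α) (n : ℕ) :
    logMoment μ α n ≤ ENNReal.ofReal (0 ^ n * Real.log 2 ^ α) * μ (Ico 0 1) +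
      ∫⁻ s in Ioo (0 : ℝ) 1, μ (Ioo s 1) * ENNReal.ofReal (Real.log (2 / (1 - s)) ^ α *
        (n * s ^ (n - 1) + s ^ n * (α / (Real.log (2 / (1 - s)) * (1 - s))))) := by
  rw [← lintegral_lintegral_Ioo 0 1 (by fun_prop), ← setLIntegral_const,
    ← lintegral_add_left measurable_const]
  refine setLIntegral_mono' measurableSet_Ico fun t ht => ?_
  have hmem {s : ℝ} (hs0 : 0 ≤ s) (hst : s ≤ t) : s ∈ Ico (0 : ℝ) 1 := ⟨hs0, hst.trans_lt ht.2⟩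
  rw [lintegral_ofReal_deriv_eq_sub
    (F := fun s => s ^ n * Real.log (2 / (1 - s)) ^ α) ht.1
    (fun s hs => (hasDerivAt_pow_mul_log_rpow n α
      (hmem hs.1 hs.2)).continuousAt.continuousWithinAt)
    (fun s hs => hasDerivAt_pow_mul_log_rpow n α (hmem hs.1.le hs.2.le))]
  · rw [sub_zero, div_one]
    exact (ENNReal.ofReal_le_ofReal (add_sub_cancel _ _).ge).trans ofReal_add_le
  · intro s hs
    have hs' := hmem hs.1.le hs.2.le
    have hlog := log_two_div_pos hs'
    have := hs.1
    have := sub_pos.2 hs'.2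
    positivity

lemma measure_Ioo_mul_ofReal_deriv_le [IsFiniteMeasure μ] (hα : 0 ≤ α) (hC : 0 ≤ C) (n : ℕ)
    {s : ℝ} (hs : s ∈ Ioo (0 : ℝ) 1)
    (hμ : (μ (Ico s 1)).toReal * Real.log (2 / (1 - s)) ^ α ≤ C * (1 - s)) :
    μ (Ioo s 1) * ENNReal.ofReal (Real.log (2 / (1 - s)) ^ α *
        (n * s ^ (n - 1) + s ^ n * (α / (Real.log (2 / (1 - s)) * (1 - s))))) ≤
      ENNReal.ofReal C * ENNReal.ofReal (n * s ^ (n - 1) * (1 - s) + 2 * α * s ^ n) := by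
  obtain ⟨hs0, hs1⟩ := hs
  have := sub_pos.2 hs1
  have hlog : 1 / 2 ≤ Real.log (2 / (1 - s)) := by
    linarith [log_two_le_log_two_div ⟨hs0.le, hs1⟩, Real.log_two_gt_d9]
  have := log_two_div_pos ⟨hs0.le, hs1⟩
  refine (mul_le_mul_left (measure_mono Ioo_subset_Ico_self) _).trans ?_
  rw [← ofReal_toReal (measure_ne_top μ (Ico s 1)), ← ofReal_mul toReal_nonneg, ← ofReal_mul hC]
  refine ofReal_le_ofReal ?_
  calc (μ (Ico s 1)).toReal * (Real.log (2 / (1 - s)) ^ α *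
        (n * s ^ (n - 1) + s ^ n * (α / (Real.log (2 / (1 - s)) * (1 - s)))))
      ≤ C * (1 - s) * (n * s ^ (n - 1) + s ^ n * (α / (1 / 2 * (1 - s)))) := by
        rw [← mul_assoc]
        gcongr ?_ * (_ + _ * (_ / (?_ * _)))
    _ = C * (n * s ^ (n - 1) * (1 - s) + 2 * α * s ^ n) := by field_simp

lemma IsLogCarleson.exists_logMoment_le [IsFiniteMeasure μ] (hα : 0 ≤ α)
    (h : IsLogCarleson μ α 1) :
    ∃ A > 0, ∀ n : ℕ, logMoment μ α n ≤ ENNReal.ofReal (A / (n + 1)) := by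
  obtain ⟨C, hC, hμ⟩ := h
  simp only [Real.rpow_one] at hμ
  refine ⟨Real.log 2 ^ α * (μ (Ico 0 1)).toReal + C * (1 + 2 * α), by positivity, fun n => ?_⟩
  have hzero : (0 : ℝ) ^ n ≤ 1 / (n + 1) := by
    rcases n.eq_zero_or_pos with rfl | hn
    · simp
    · rw [zero_pow hn.ne']
      positivity
  calc logMoment μ α n
      ≤ ENNReal.ofReal (0 ^ n * Real.log 2 ^ α) * μ (Ico 0 1) +
        ∫⁻ s in Ioo (0 : ℝ) 1, μ (Ioo s 1) * ENNReal.ofReal (Real.log (2 / (1 - s)) ^ α *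
          (n * s ^ (n - 1) + s ^ n * (α / (Real.log (2 / (1 - s)) * (1 - s))))) :=
        logMoment_le_add_lintegral hα n
    _ ≤ ENNReal.ofReal (0 ^ n * Real.log 2 ^ α) * μ (Ico 0 1) +
        ENNReal.ofReal C * ENNReal.ofReal ((1 + 2 * α) / (n + 1)) := by
      gcongr
      refine (setLIntegral_mono' measurableSet_Ioo fun s hs =>
        measure_Ioo_mul_ofReal_deriv_le hα hC.le n hs (hμ s ⟨hs.1.le, hs.2⟩)).trans ?_
      rw [lintegral_const_mul _ (by fun_prop)]
      gcongr
      exact lintegral_Ioo_pow_mul_one_sub_add n (by positivity)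
    _ = ENNReal.ofReal
        (0 ^ n * Real.log 2 ^ α * (μ (Ico 0 1)).toReal + C * ((1 + 2 * α) / (n + 1))) := by
      rw [ofReal_add (by positivity) (by positivity), ofReal_mul hC.le,
        ofReal_mul (p := 0 ^ n * _) (by positivity), ofReal_toReal (measure_ne_top _ _)]
    _ ≤ ENNReal.ofReal (1 / (n + 1) * Real.log 2 ^ α * (μ (Ico 0 1)).toReal +
        C * ((1 + 2 * α) / (n + 1))) := by gcongr
    _ = _ := by ring_nf

lemma isLogCarleson_of_logMoment_le [IsFiniteMeasure μ] (hα : 0 ≤ α) (hA : 0 ≤ A)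
    (h : ∀ n : ℕ, logMoment μ α n ≤ ENNReal.ofReal (A / (n + 1))) : IsLogCarleson μ α 1 := by
  refine ⟨4 * A + 1, by positivity, fun s hs => ?_⟩
  have hs1 := sub_pos.2 hs.2
  have hlog := log_two_div_pos hs
  set N := ⌊1 / (2 * (1 - s))⌋₊
  have hNs : N * (1 - s) ≤ 1 / 2 := by
    have := (le_div_iff₀ (by positivity)).1 (Nat.floor_le (a := 1 / (2 * (1 - s))) (by positivity))
    linarith
  have hsN : 1 / 2 ≤ s ^ N := by
    simpa using one_half_le_one_sub_pow hNs (sub_le_self 1 hs.1)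
  have hN : 1 / (N + 1) ≤ 2 * (1 - s) :=
    (one_div_le (by positivity) (by positivity)).1 (Nat.lt_floor_add_one _).le
  have hle : ENNReal.ofReal (1 / 2 * Real.log (2 / (1 - s)) ^ α) * μ (Ico s 1) ≤
      logMoment μ α N := by
    rw [← setLIntegral_const]
    refine (setLIntegral_mono' measurableSet_Ico fun t ht => ?_).trans
      (lintegral_mono_set (Ico_subset_Ico_left hs.1))
    have := sub_pos.2 ht.2
    gcongr
    · exact pow_nonneg (hs.1.trans ht.1) N
    · exact hsN.trans (pow_le_pow_left₀ hs.1 ht.1 N)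
    · exact ht.1
  have hμ := ENNReal.toReal_mono ofReal_ne_top (hle.trans (h N))
  rw [toReal_mul, toReal_ofReal (by positivity), toReal_ofReal (by positivity)] at hμ
  rw [Real.rpow_one]
  calc (μ (Ico s 1)).toReal * Real.log (2 / (1 - s)) ^ α
      = 2 * (1 / 2 * Real.log (2 / (1 - s)) ^ α * (μ (Ico s 1)).toReal) := by ring
    _ ≤ 2 * (A * (1 / (N + 1))) := by rw [mul_one_div]; gcongr
    _ ≤ 2 * (A * (2 * (1 - s))) := by gcongr
    _ ≤ (4 * A + 1) * (1 - s) := by linarith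

end LogMoment

section Operators

variable {μ : Measure ℝ} {f G : ℂ → ℂ} {z : ℂ} {t A : ℝ}

lemma norm_ofReal_mul_le (ht : t ∈ Ico (0 : ℝ) 1) (z : ℂ) : ‖(t : ℂ) * z‖ ≤ ‖z‖ := by
  rw [norm_mul, Complex.norm_of_nonneg ht.1]
  exact mul_le_of_le_one_left (norm_nonneg z) ht.2.le

lemma norm_ofReal_pow_mul_le (ht : t ∈ Ico (0 : ℝ) 1) (n : ℕ) (z : ℂ) :
    ‖(t : ℂ) ^ n * z‖ ≤ ‖z‖ := by
  rw [norm_mul, norm_pow, Complex.norm_of_nonneg ht.1]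
  exact mul_le_of_le_one_left (norm_nonneg z) (pow_le_one₀ ht.1 ht.2.le)

lemma integrableOn_pow [IsFiniteMeasure μ] (n : ℕ) :
    IntegrableOn (fun t : ℝ => t ^ n) (Ico (0 : ℝ) 1) μ :=
  (continuous_pow n).continuousOn.integrableOn_compact isCompact_Icc |>.mono_set
    Ico_subset_Icc_self

lemma mom_nonneg (μ : Measure ℝ) (n : ℕ) : 0 ≤ mom μ n :=
  setIntegral_nonneg measurableSet_Ico fun _ ht => pow_nonneg ht.1 n

lemma antitone_mom (μ : Measure ℝ) [IsFiniteMeasure μ] : Antitone (mom μ) := fun m n hmn =>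
  setIntegral_mono_on (integrableOn_pow n) (integrableOn_pow m) measurableSet_Ico
    fun _ ht => pow_le_pow_of_le_one ht.1 ht.2.le hmn

lemma integrableOn_pow_mul {g : ℝ → ℂ} (hg : IntegrableOn g (Ico (0 : ℝ) 1) μ) (n : ℕ) :
    IntegrableOn (fun t : ℝ => (t : ℂ) ^ n * g t) (Ico (0 : ℝ) 1) μ :=
  Integrable.mono hg
    ((by fun_prop : Measurable fun t : ℝ => (t : ℂ) ^ n).aestronglyMeasurable.mul hg.1)
    (by filter_upwards [ae_restrict_mem measurableSet_Ico] with t ht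
        using norm_ofReal_pow_mul_le ht n (g t))

lemma imuWD_iff_integrableOn :
    ImuWD μ f ↔ IntegrableOn (fun t : ℝ => f t) (Ico (0 : ℝ) 1) μ := by
  refine ⟨fun h => by simpa using h 0 (mem_ball_self one_pos), fun hf z hz => ?_⟩
  have hz1 : 0 < 1 - ‖z‖ := by simpa using hz
  simp only [div_eq_mul_inv]
  refine hf.mul_bdd (c := (1 - ‖z‖)⁻¹) (by fun_prop) ?_
  filter_upwards [ae_restrict_mem measurableSet_Ico] with t ht
  rw [norm_inv]
  gcongr
  calc 1 - ‖z‖ ≤ ‖(1 : ℂ)‖ - ‖(t : ℂ) * z‖ := by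
        rw [norm_one]
        gcongr
        exact norm_ofReal_mul_le ht z
    _ ≤ ‖1 - (t : ℂ) * z‖ := norm_sub_norm_le _ _

lemma hasSum_Imu (hf : IntegrableOn (fun t : ℝ => f t) (Ico (0 : ℝ) 1) μ)
    (hz : z ∈ ball (0 : ℂ) 1) :
    HasSum (fun n => (∫ t in Ico (0 : ℝ) 1, (t : ℂ) ^ n * f t ∂μ) * z ^ n) (Imu μ f z) := by
  have hz1 : ‖z‖ < 1 := by simpa using hz
  have hint (n : ℕ) := (integrableOn_pow_mul hf n).mul_const (z ^ n)
  have hsummable : Summable fun n => ∫ t in Ico (0 : ℝ) 1, ‖(t : ℂ) ^ n * f t * z ^ n‖ ∂μ := by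
    refine .of_nonneg_of_le (fun n => integral_nonneg fun t => norm_nonneg _) (fun n => ?_)
      ((summable_geometric_of_lt_one (norm_nonneg z) hz1).mul_left
        (∫ t in Ico (0 : ℝ) 1, ‖f t‖ ∂μ))
    rw [← integral_mul_const]
    refine setIntegral_mono_on (hint n).norm (hf.norm.mul_const _) measurableSet_Ico fun t ht => ?_
    rw [norm_mul, norm_pow z]
    gcongr
    exact norm_ofReal_pow_mul_le ht n (f t)
  have hgeom (t : ℝ) (ht : t ∈ Ico (0 : ℝ) 1) :
      ∑' n, (t : ℂ) ^ n * f t * z ^ n = f t / (1 - t * z) := by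
    have h := tsum_geometric_of_norm_lt_one ((norm_ofReal_mul_le ht z).trans_lt hz1)
    rw [div_eq_mul_inv, ← h, ← tsum_mul_left]
    exact tsum_congr fun n => by ring
  rw [Imu, ← setIntegral_congr_fun measurableSet_Ico hgeom]
  simpa only [integral_mul_const] using hasSum_integral_of_summable_integral_norm hint hsummable

lemma integrableOn_const_mul_pow [IsFiniteMeasure μ] (a : ℂ) (n : ℕ) :
    IntegrableOn (fun t : ℝ => a * (t : ℂ) ^ n) (Ico (0 : ℝ) 1) μ := by
  simpa only [IntegrableOn, Complex.coe_algebraMap, Complex.ofReal_pow] using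
    (integrableOn_pow n).ofReal.const_mul a

lemma integral_norm_const_mul_pow (a : ℂ) (n : ℕ) :
    ∫ t in Ico (0 : ℝ) 1, ‖a * (t : ℂ) ^ n‖ ∂μ = mom μ n * ‖a‖ := by
  rw [mom, ← integral_mul_const]
  refine setIntegral_congr_fun measurableSet_Ico fun t ht => ?_
  simp [abs_of_nonneg ht.1, mul_comm]

lemma integrableOn_of_summable_mom [IsFiniteMeasure μ]
    (hf : DifferentiableOn ℂ f (ball (0 : ℂ) 1)) (hs : Summable fun k => mom μ k * ‖tc f k‖) :
    IntegrableOn (fun t : ℝ => f t) (Ico (0 : ℝ) 1) μ := by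
  have hcont : ContinuousOn (fun t : ℝ => f t) (Ico (0 : ℝ) 1) :=
    hf.continuousOn.comp Complex.continuous_ofReal.continuousOn fun t ht => ofReal_mem_ball ht
  refine ⟨hcont.aestronglyMeasurable measurableSet_Ico, ?_⟩
  calc ∫⁻ t in Ico (0 : ℝ) 1, ‖f t‖ₑ ∂μ
      ≤ ∫⁻ t in Ico (0 : ℝ) 1, ∑' k, ‖tc f k * (t : ℂ) ^ k‖ₑ ∂μ := by
        refine setLIntegral_mono' measurableSet_Ico fun t ht => ?_
        rw [← (hasSum_tc_mul_pow hf (ofReal_mem_ball ht)).tsum_eq]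
        exact enorm_tsum_le_tsum_enorm
    _ = ∑' k, ENNReal.ofReal (mom μ k * ‖tc f k‖) := by
        rw [lintegral_tsum fun k => by fun_prop]
        simp only [← integral_norm_const_mul_pow,
          ofReal_integral_norm_eq_lintegral_enorm (integrableOn_const_mul_pow _ _)]
    _ < ∞ := hs.tsum_ofReal_lt_top

lemma hmuCoeff_eq_integral [IsFiniteMeasure μ] (hf : DifferentiableOn ℂ f (ball (0 : ℂ) 1))
    {n : ℕ} (hs : Summable fun k => mom μ (n + k) * ‖tc f k‖) :
    hmuCoeff μ f n = ∫ t in Ico (0 : ℝ) 1, (t : ℂ) ^ n * f t ∂μ := by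
  have hterm (k : ℕ) : ∫ t in Ico (0 : ℝ) 1, tc f k * (t : ℂ) ^ (n + k) ∂μ =
      mom μ (n + k) * tc f k := by
    rw [integral_const_mul, mom, mul_comm, ← integral_complex_ofReal]
    simp only [Complex.ofReal_pow]
  have htaylor (t : ℝ) (ht : t ∈ Ico (0 : ℝ) 1) :
      ∑' k, tc f k * (t : ℂ) ^ (n + k) = (t : ℂ) ^ n * f t := by
    rw [← (hasSum_tc_mul_pow hf (ofReal_mem_ball ht)).tsum_eq, ← tsum_mul_left]
    exact tsum_congr fun k => by ring
  rw [hmuCoeff, ← setIntegral_congr_fun measurableSet_Ico htaylor]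
  simp only [← hterm]
  exact (hasSum_integral_of_summable_integral_norm
    (fun k => integrableOn_const_mul_pow (tc f k) (n + k))
    (by simpa only [integral_norm_const_mul_pow] using hs)).tsum_eq

lemma summable_norm_mom_mul_tc_iff {n : ℕ} :
    (Summable fun k => ‖(mom μ (n + k) : ℂ) * tc f k‖) ↔
      Summable fun k => mom μ (n + k) * ‖tc f k‖ := by
  simp only [norm_mul, Complex.norm_of_nonneg (mom_nonneg μ _)]

lemma hmuWD_of_summable_mom [IsFiniteMeasure μ] (hf : DifferentiableOn ℂ f (ball (0 : ℂ) 1))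
    (hs : Summable fun k => mom μ k * ‖tc f k‖) : HmuWD μ f := by
  have hshift (n : ℕ) : Summable fun k => mom μ (n + k) * ‖tc f k‖ :=
    hs.of_nonneg_of_le (fun k => mul_nonneg (mom_nonneg μ _) (norm_nonneg _)) fun k =>
      mul_le_mul_of_nonneg_right (antitone_mom μ (Nat.le_add_left k n)) (norm_nonneg _)
  refine ⟨fun n => summable_norm_mom_mul_tc_iff.2 (hshift n), fun z hz => ?_⟩
  simp only [hmuCoeff_eq_integral hf (hshift _)]
  exact (hasSum_Imu (integrableOn_of_summable_mom hf hs) hz).summable.norm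

lemma HmuWD.integrableOn [IsFiniteMeasure μ] (h : HmuWD μ f)
    (hf : DifferentiableOn ℂ f (ball (0 : ℂ) 1)) :
    IntegrableOn (fun t : ℝ => f t) (Ico (0 : ℝ) 1) μ :=
  integrableOn_of_summable_mom hf
    (by simpa only [zero_add] using summable_norm_mom_mul_tc_iff.1 (h.1 0))

lemma HmuWD.hasSum_Hmu [IsFiniteMeasure μ] (h : HmuWD μ f)
    (hf : DifferentiableOn ℂ f (ball (0 : ℂ) 1)) (hz : z ∈ ball (0 : ℂ) 1) :
    HasSum (fun n => (∫ t in Ico (0 : ℝ) 1, (t : ℂ) ^ n * f t ∂μ) * z ^ n) (Hmu μ f z) := by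
  simpa only [Hmu, hmuCoeff_eq_integral hf (summable_norm_mom_mul_tc_iff.1 (h.1 _))] using
    (h.2 z hz).of_norm.hasSum

end Operators

section Boundedness

variable {μ : Measure ℝ} {f G : ℂ → ℂ} {t A : ℝ}

lemma MemLambda.norm_apply_le (hf : MemLambda f) (ht : t ∈ Ico (0 : ℝ) 1) :
    ‖f t‖ ≤ 2 * lambdaNorm f * Real.log (2 / (1 - t)) := by
  refine le_of_tendsto' (hasSum_tc_mul_pow hf.1 (ofReal_mem_ball ht)).tendsto_sum_nat.norm
    fun N => (norm_sum_le _ _).trans ?_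
  simpa only [norm_mul, norm_pow, Complex.norm_of_nonneg ht.1] using
    hf.sum_norm_tc_mul_pow_le ht N

lemma lintegral_ofReal_pow_mul_le {g : ℝ → ℝ} {K : ℝ} (hK : 0 ≤ K)
    (hg : ∀ t ∈ Ico (0 : ℝ) 1, g t ≤ K * Real.log (2 / (1 - t))) {n : ℕ}
    (hlog : logMoment μ 1 n ≤ ENNReal.ofReal A) :
    ∫⁻ t in Ico (0 : ℝ) 1, ENNReal.ofReal (t ^ n * g t) ∂μ ≤ ENNReal.ofReal (K * A) := by
  rw [ofReal_mul hK]
  refine le_trans ?_ (mul_le_mul_right hlog (ENNReal.ofReal K))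
  rw [logMoment, ← lintegral_const_mul _ (by fun_prop)]
  refine setLIntegral_mono' measurableSet_Ico fun t ht => ?_
  rw [← ofReal_mul hK, Real.rpow_one, mul_left_comm]
  exact ofReal_le_ofReal (mul_le_mul_of_nonneg_left (hg t ht) (pow_nonneg ht.1 n))

lemma MemLambda.summable_mom_mul_norm_tc [IsFiniteMeasure μ] (hf : MemLambda f) (hA : 0 ≤ A)
    (hlog : logMoment μ 1 0 ≤ ENNReal.ofReal A) : Summable fun k => mom μ k * ‖tc f k‖ := by
  have hL := lambdaNorm_nonneg f
  refine summable_of_sum_range_le (c := 2 * lambdaNorm f * A)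
    (fun k => mul_nonneg (mom_nonneg _ _) (norm_nonneg _)) fun N => ?_
  have hint : IntegrableOn (fun t : ℝ => ∑ k ∈ Finset.range N, ‖tc f k‖ * t ^ k) (Ico 0 1) μ :=
    integrable_finsetSum _ fun k _ => (integrableOn_pow k).const_mul _
  have hsum : ∑ k ∈ Finset.range N, mom μ k * ‖tc f k‖ =
      ∫ t in Ico (0 : ℝ) 1, ∑ k ∈ Finset.range N, ‖tc f k‖ * t ^ k ∂μ := by
    rw [integral_finsetSum _ fun k _ => (integrableOn_pow k).const_mul _]
    exact Finset.sum_congr rfl fun k _ => by rw [integral_const_mul, mul_comm, mom]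
  rw [hsum, ← ofReal_le_ofReal_iff (by positivity), ofReal_integral_eq_lintegral_ofReal hint]
  · simpa only [pow_zero, one_mul] using lintegral_ofReal_pow_mul_le (by positivity)
      (fun t ht => hf.sum_norm_tc_mul_pow_le ht N) hlog
  · filter_upwards [ae_restrict_mem measurableSet_Ico] with t ht
    exact Finset.sum_nonneg fun k _ => mul_nonneg (norm_nonneg _) (pow_nonneg ht.1 k)

lemma MemLambda.norm_integral_pow_mul_le (hf : MemLambda f) (hA : 0 ≤ A) {n : ℕ}
    (hlog : logMoment μ 1 n ≤ ENNReal.ofReal A) :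
    ‖∫ t in Ico (0 : ℝ) 1, (t : ℂ) ^ n * f t ∂μ‖ ≤ 2 * lambdaNorm f * A := by
  have hL := lambdaNorm_nonneg f
  rw [← ofReal_le_ofReal_iff (by positivity), ofReal_norm]
  refine (enorm_integral_le_lintegral_enorm _).trans (le_trans (le_of_eq ?_)
    (lintegral_ofReal_pow_mul_le (by positivity) (fun t ht => hf.norm_apply_le ht) hlog))
  refine setLIntegral_congr_fun measurableSet_Ico fun t ht => ?_
  rw [← ofReal_norm, norm_mul, norm_pow, Complex.norm_of_nonneg ht.1]

lemma MemLambda.memLambda_and_lambdaNorm_le_of_hasSum (hf : MemLambda f) (hA : 0 ≤ A)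
    (hlog : ∀ n : ℕ, logMoment μ 1 n ≤ ENNReal.ofReal (A / (n + 1)))
    (hG : ∀ z ∈ ball (0 : ℂ) 1,
      HasSum (fun n => (∫ t in Ico (0 : ℝ) 1, (t : ℂ) ^ n * f t ∂μ) * z ^ n) (G z)) :
    MemLambda G ∧ lambdaNorm G ≤ 4 * A * lambdaNorm f := by
  have hL := lambdaNorm_nonneg f
  have hcoeff (n : ℕ) := hf.norm_integral_pow_mul_le (by positivity) (hlog n)
  have hzero := hcoeff 0
  rw [Nat.cast_zero, zero_add, div_one] at hzero
  obtain ⟨hmem, hnorm⟩ := memLambda_and_lambdaNorm_le hG (B := 2 * lambdaNorm f * A) fun n => by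
    calc (n + 1 : ℝ) * ‖∫ t in Ico (0 : ℝ) 1, (t : ℂ) ^ (n + 1) * f t ∂μ‖
        ≤ (n + 1) * (2 * lambdaNorm f * (A / (n + 1))) := by
          gcongr
          refine (hcoeff (n + 1)).trans ?_
          gcongr
          simp
      _ = 2 * lambdaNorm f * A := by field_simp
  exact ⟨hmem, by linarith⟩

lemma IsLogCarleson.exists_lambdaNorm_bound [IsFiniteMeasure μ] (h : IsLogCarleson μ 1 1) :
    ∃ C > 0, ∀ f, MemLambda f → (Summable fun k => mom μ k * ‖tc f k‖) ∧
      ∀ G : ℂ → ℂ, (∀ z ∈ ball (0 : ℂ) 1,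
        HasSum (fun n => (∫ t in Ico (0 : ℝ) 1, (t : ℂ) ^ n * f t ∂μ) * z ^ n) (G z)) →
      MemLambda G ∧ lambdaNorm G ≤ C * lambdaNorm f := by
  obtain ⟨A, hA, hlog⟩ := h.exists_logMoment_le zero_le_one
  refine ⟨4 * A, by positivity, fun f hf => ⟨hf.summable_mom_mul_norm_tc hA.le ?_,
    fun G hG => hf.memLambda_and_lambdaNorm_le_of_hasSum hA.le hlog hG⟩⟩
  simpa using hlog 0

end Boundedness

section TestFunction

variable {μ : Measure ℝ} {G : ℂ → ℂ} {t : ℝ}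

/-- The function `log (2 / (1 - z))`, which has the largest growth on `[0,1)` allowed in
`Λ²_{1/2}`. It is split as a difference so that no branch of `log (2 / (1 - z))` intervenes. -/
def logTest (z : ℂ) : ℂ := Complex.log 2 - Complex.log (1 - z)

lemma hasSum_logTest {z : ℂ} (hz : z ∈ ball (0 : ℂ) 1) :
    HasSum (fun n : ℕ => ((if n = 0 then Complex.log 2 else 0) + (n : ℂ)⁻¹) * z ^ n)
      (logTest z) := by
  rw [logTest, sub_eq_add_neg]
  convert! (hasSum_ite_eq 0 (Complex.log 2)).add
    (Complex.hasSum_taylorSeries_neg_log (by simpa using hz)) using 2 with n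
  by_cases hn : n = 0
  · simp [hn]
  · simp [hn, div_eq_inv_mul]

lemma memLambda_logTest : MemLambda logTest := by
  refine (memLambda_and_lambdaNorm_le (B := 1) (fun z hz => hasSum_logTest hz) fun n => ?_).1
  rw [if_neg n.succ_ne_zero, zero_add, norm_inv, Complex.norm_natCast, Nat.cast_succ,
    mul_inv_cancel₀ n.cast_add_one_ne_zero]

lemma logTest_ofReal (ht : t ∈ Ico (0 : ℝ) 1) : logTest t = Real.log (2 / (1 - t)) := by
  have ht' := sub_pos.2 ht.2
  rw [Real.log_div two_ne_zero ht'.ne', Complex.ofReal_sub, Complex.ofReal_log zero_le_two,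
    Complex.ofReal_log ht'.le]
  simp [logTest]

lemma isLogCarleson_of_tc_eq_integral_logTest [IsFiniteMeasure μ]
    (hint : IntegrableOn (fun t : ℝ => logTest t) (Ico (0 : ℝ) 1) μ) (hG : MemLambda G)
    (htc : ∀ n, tc G n = ∫ t in Ico (0 : ℝ) 1, (t : ℂ) ^ n * logTest t ∂μ) :
    IsLogCarleson μ 1 1 := by
  let b (n : ℕ) : ℝ := ∫ t in Ico (0 : ℝ) 1, t ^ n * Real.log (2 / (1 - t)) ∂μ
  have hreal (n : ℕ) (t : ℝ) (ht : t ∈ Ico (0 : ℝ) 1) :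
      (t : ℂ) ^ n * logTest t = (t ^ n * Real.log (2 / (1 - t)) : ℝ) := by
    rw [logTest_ofReal ht, Complex.ofReal_mul, Complex.ofReal_pow]
  have hintb (n : ℕ) :
      IntegrableOn (fun t : ℝ => t ^ n * Real.log (2 / (1 - t))) (Ico 0 1) μ :=
    IntegrableOn.congr_fun (integrableOn_pow_mul hint n).re
      (fun t ht => by simp only [hreal n t ht, RCLike.re_to_complex, Complex.ofReal_re])
      measurableSet_Ico
  have hnonneg (n : ℕ) (t : ℝ) (ht : t ∈ Ico (0 : ℝ) 1) :
      0 ≤ t ^ n * Real.log (2 / (1 - t)) :=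
    mul_nonneg (pow_nonneg ht.1 n) (log_two_div_pos ht).le
  have hb (n : ℕ) : ‖tc G n‖ = b n := by
    rw [htc, setIntegral_congr_fun measurableSet_Ico (hreal n), integral_complex_ofReal,
      Complex.norm_of_nonneg (setIntegral_nonneg measurableSet_Ico (hnonneg n))]
  have hanti : Antitone fun n => ‖tc G n‖ := fun m n hmn => by
    simp only [hb]
    refine setIntegral_mono_on (hintb n) (hintb m) measurableSet_Ico fun t ht => ?_
    exact mul_le_mul_of_nonneg_right (pow_le_pow_of_le_one ht.1 ht.2.le hmn)
      (log_two_div_pos ht).le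
  refine isLogCarleson_of_logMoment_le zero_le_one
    (mul_nonneg (by norm_num : (0 : ℝ) ≤ 6) (lambdaNorm_nonneg G)) fun n => ?_
  calc logMoment μ 1 n = ENNReal.ofReal (b n) := by
        simp only [logMoment, Real.rpow_one]
        refine (ofReal_integral_eq_lintegral_ofReal (hintb n) ?_).symm
        filter_upwards [ae_restrict_mem measurableSet_Ico] with t ht using hnonneg n t ht
    _ ≤ ENNReal.ofReal (6 * lambdaNorm G / (n + 1)) := by
        rw [← hb]
        gcongr
        rw [le_div_iff₀' (by positivity)]
        exact hG.add_one_mul_norm_tc_le hanti n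

end TestFunction

/-- Theorem 3.4 for `X = Λ²_{1/2}`: boundedness of `I_μ` and of `H_μ` on `Λ²_{1/2}` is
equivalent to `μ` being a `1`-logarithmic `1`-Carleson measure. -/
theorem imu_hmu_lambda_tfae (μ : Measure ℝ) [IsFiniteMeasure μ]
    (hsupp : μ (Ico (0:ℝ) 1)ᶜ = 0) :
    [ (∀ f : ℂ → ℂ, MemLambda f → ImuWD μ f ∧ MemLambda (Imu μ f)) ∧
        ∃ C > 0, ∀ f : ℂ → ℂ, MemLambda f → lambdaNorm (Imu μ f) ≤ C * lambdaNorm f,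
      (∀ f : ℂ → ℂ, MemLambda f → HmuWD μ f ∧ MemLambda (Hmu μ f)) ∧
        ∃ C > 0, ∀ f : ℂ → ℂ, MemLambda f → lambdaNorm (Hmu μ f) ≤ C * lambdaNorm f,
      IsLogCarleson μ 1 1 ].TFAE := by
  tfae_have 3 → 1 := fun h => by
    obtain ⟨C, hC, hbound⟩ := h.exists_lambdaNorm_bound
    have hint f hf := integrableOn_of_summable_mom hf.1 (hbound f hf).1
    have hImu f hf := (hbound f hf).2 (Imu μ f) fun z => hasSum_Imu (hint f hf)
    exact ⟨fun f hf => ⟨imuWD_iff_integrableOn.2 (hint f hf), (hImu f hf).1⟩,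
      C, hC, fun f hf => (hImu f hf).2⟩
  tfae_have 3 → 2 := fun h => by
    obtain ⟨C, hC, hbound⟩ := h.exists_lambdaNorm_bound
    have hwd f hf := hmuWD_of_summable_mom hf.1 (hbound f hf).1
    have hHmu f hf := (hbound f hf).2 (Hmu μ f) fun z => (hwd f hf).hasSum_Hmu hf.1
    exact ⟨fun f hf => ⟨hwd f hf, (hHmu f hf).1⟩, C, hC, fun f hf => (hHmu f hf).2⟩
  tfae_have 1 → 3 := fun ⟨h, _⟩ => by
    obtain ⟨hwd, hmem⟩ := h logTest memLambda_logTest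
    have hint := imuWD_iff_integrableOn.1 hwd
    exact isLogCarleson_of_tc_eq_integral_logTest hint hmem
      (tc_eq_of_hasSum fun z => hasSum_Imu hint)
  tfae_have 2 → 3 := fun ⟨h, _⟩ => by
    obtain ⟨hwd, hmem⟩ := h logTest memLambda_logTest
    exact isLogCarleson_of_tc_eq_integral_logTest (hwd.integrableOn memLambda_logTest.1) hmem
      (tc_eq_of_hasSum fun z => hwd.hasSum_Hmu memLambda_logTest.1)
  tfae_finish

end PaperHankel
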